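/- The image of the algebra homomorphism Θ : A_t → ∏_{m≥0} M_{m+1}(ℂ), Θ(Z) = (ρ_0(Z), ρ_1(Z), ρ_2(Z), …), is dense in ∏_{m≥0} M_{m+1}(ℂ) with respect to the product topology. -/

import Mathlib

open scoped TensorProduct
open Complex

noncomputable section

/-- The four generators `X`, `Y`, `K`, `K⁻¹` of the algebra `Aₜ`. -/
inductive QGen : Type
  | X | Y | K | K'
  deriving DecidableEq

/-- The image of a generator in the free algebra on the generators. -/
def qg (x : QGen) : FreeAlgebra ℂ QGen := FreeAlgebra.ι ℂ x

/-- The defining relations of `Aₜ`: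
`KX = t²XK`, `KY = t⁻²YK`, `XY − YX = (K² − K⁻²)/(t² − t⁻²)`, `KK⁻¹ = K⁻¹K = 1`. -/
inductive QRel (t : ℂ) : FreeAlgebra ℂ QGen → FreeAlgebra ℂ QGen → Prop
  | KX : QRel t (qg .K * qg .X) ((t ^ 2 : ℂ) • (qg .X * qg .K))
  | KY : QRel t (qg .K * qg .Y) ((t⁻¹ ^ 2 : ℂ) • (qg .Y * qg .K))
  | XY : QRel t (qg .X * qg .Y - qg .Y * qg .X)
      (((t ^ 2 - t⁻¹ ^ 2)⁻¹ : ℂ) • (qg .K * qg .K - qg .K' * qg .K'))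
  | KK' : QRel t (qg .K * qg .K') 1
  | K'K : QRel t (qg .K' * qg .K) 1

/-- The algebra `Aₜ`: the quotient of the free algebra by the defining relations. -/
abbrev At (t : ℂ) : Type := RingQuot (QRel t)

/-- The generator `X` in `Aₜ`. -/
def aX (t : ℂ) : At t := RingQuot.mkAlgHom ℂ (QRel t) (qg .X)
/-- The generator `Y` in `Aₜ`. -/
def aY (t : ℂ) : At t := RingQuot.mkAlgHom ℂ (QRel t) (qg .Y)
/-- The generator `K` in `Aₜ`. -/
def aK (t : ℂ) : At t := RingQuot.mkAlgHom ℂ (QRel t) (qg .K)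
/-- The generator `K⁻¹` in `Aₜ`. -/
def aK' (t : ℂ) : At t := RingQuot.mkAlgHom ℂ (QRel t) (qg .K')

/-- The quantum integer `[n] = (t^{2n} − t^{−2n})/(t² − t⁻²)`. -/
def qint (t : ℂ) (n : ℤ) : ℂ := (t ^ (2 * n) - t ^ (-(2 * n))) / (t ^ 2 - t⁻¹ ^ 2)

/-- The matrix of `ρ_m(K)`: `K e_j = t^{m−2j} e_j`. -/
def Kmat (t : ℂ) (m : ℕ) : Matrix (Fin (m + 1)) (Fin (m + 1)) ℂ :=
  Matrix.diagonal fun j => t ^ ((m : ℤ) - 2 * (j : ℤ))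

/-- The matrix of `ρ_m(K⁻¹)`: `K⁻¹ e_j = t^{−(m−2j)} e_j`. -/
def K'mat (t : ℂ) (m : ℕ) : Matrix (Fin (m + 1)) (Fin (m + 1)) ℂ :=
  Matrix.diagonal fun j => t ^ (-((m : ℤ) - 2 * (j : ℤ)))

/-- The matrix of `ρ_m(X)`: `X e_j = [j] e_{j−1}` (with `e_{−1} = 0`). -/
def Xmat (t : ℂ) (m : ℕ) : Matrix (Fin (m + 1)) (Fin (m + 1)) ℂ :=
  Matrix.of fun i j => if (j : ℕ) = (i : ℕ) + 1 then qint t (j : ℤ) else 0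

/-- The matrix of `ρ_m(Y)`: `Y e_j = [m−j] e_{j+1}` (with `e_{m+1} = 0`). -/
def Ymat (t : ℂ) (m : ℕ) : Matrix (Fin (m + 1)) (Fin (m + 1)) ℂ :=
  Matrix.of fun i j => if (i : ℕ) = (j : ℕ) + 1 then qint t ((m : ℤ) - (j : ℤ)) else 0

/-- `ρ` is the representation `ρ_m : Aₜ → M_{m+1}(ℂ)` determined by the matrices above. -/
def IsRho (t : ℂ) (m : ℕ) (ρ : At t →ₐ[ℂ] Matrix (Fin (m + 1)) (Fin (m + 1)) ℂ) : Prop :=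
  ρ (aX t) = Xmat t m ∧ ρ (aY t) = Ymat t m ∧ ρ (aK t) = Kmat t m ∧ ρ (aK' t) = K'mat t m

/-! The Casimir element acts on `m̲` by a scalar, and since `t` is not a root of unity these scalars
are pairwise distinct. Lagrange interpolation in the Casimir element therefore produces elements of
`Aₜ` that act as the identity on one of finitely many given `m̲` and as zero on the others. Each
`ρ_m` is surjective: `K` is diagonal with distinct eigenvalues, so its polynomials give the
idempotents `E_jj`, and `X` and `Y` link each index to its neighbours in both directions. Hence `Θ`
is onto every finite subproduct, which is density in the product topology. -/

open Function Relation

section Density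

theorem denseRange_pi_of_forall_finset {X ι : Type*} {Y : ι → Type*}
    [∀ i, TopologicalSpace (Y i)] {f : X → ∀ i, Y i}
    (hf : ∀ (s : Finset ι) (y : ∀ i, Y i), ∃ x, ∀ i ∈ s, f x i = y i) : DenseRange f := by
  intro y
  refine mem_closure_iff.mpr fun U hU hy => ?_
  obtain ⟨s, u, hu, hsub⟩ := isOpen_pi_iff.mp hU y hy
  obtain ⟨x, hx⟩ := hf s y
  refine ⟨f x, hsub fun i hi => ?_, Set.mem_range_self x⟩
  rw [hx i hi]
  exact (hu i hi).2

variable {F A ι : Type*} [Field F] [Semiring A] [Algebra F A] {B : ι → Type*}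
  [∀ i, Semiring (B i)] [∀ i, Algebra F (B i)] {φ : ∀ i, A →ₐ[F] B i} {c : A} {χ : ι → F}

theorem exists_map_eq_one_and_map_eq_zero (hc : ∀ i, φ i c = algebraMap F (B i) (χ i))
    (hχ : Injective χ) {s : Finset ι} {i : ι} (hi : i ∈ s) :
    ∃ a, φ i a = 1 ∧ ∀ j ∈ s, j ≠ i → φ j a = 0 := by
  classical
  have map_aeval (p : Polynomial F) (j : ι) :
      φ j (Polynomial.aeval c p) = algebraMap F (B j) (p.eval (χ j)) := by
    rw [← Polynomial.aeval_algHom_apply, hc, Polynomial.aeval_algebraMap_apply,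
      Polynomial.coe_aeval_eq_eval]
  refine ⟨Polynomial.aeval c (Lagrange.basis s χ i), ?_, fun j hj hji => ?_⟩
  · rw [map_aeval, Lagrange.eval_basis_self hχ.injOn hi, map_one]
  · rw [map_aeval, Lagrange.eval_basis_of_ne hji.symm hj, map_zero]

theorem exists_forall_mem_finset_map_eq (hφ : ∀ i, Surjective (φ i))
    (hc : ∀ i, φ i c = algebraMap F (B i) (χ i)) (hχ : Injective χ) (s : Finset ι)
    (y : ∀ i, B i) : ∃ a, ∀ i ∈ s, φ i a = y i := by
  choose w hw using fun i => hφ i (y i)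
  choose! e he_self he_ne using
    fun i (hi : i ∈ s) => exists_map_eq_one_and_map_eq_zero hc hχ hi
  refine ⟨∑ i ∈ s, e i * w i, fun i hi => ?_⟩
  rw [map_sum, Finset.sum_eq_single_of_mem i hi, map_mul, he_self i hi, one_mul, hw]
  intro j hj hji
  rw [map_mul, he_ne j hj i hi hji.symm, zero_mul]

end Density

section MatrixSubalgebra

theorem subalgebra_eq_top_of_forall_single_mem {R n : Type*} [CommSemiring R] [Fintype n]
    [DecidableEq n] {S : Subalgebra R (Matrix n n R)} (hS : ∀ i j, Matrix.single i j 1 ∈ S) :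
    S = ⊤ := by
  refine eq_top_iff.mpr fun M _ => ?_
  rw [Matrix.matrix_eq_sum_single M]
  refine S.sum_mem fun i _ => S.sum_mem fun j _ => ?_
  rw [← mul_one (M i j), ← smul_eq_mul, ← Matrix.smul_single]
  exact S.smul_mem (hS i j) _

variable {F n : Type*} [Field F] [Fintype n] [DecidableEq n] {S : Subalgebra F (Matrix n n F)}

theorem single_self_mem_of_diagonal_mem {d : n → F} (hd : Injective d)
    (hS : Matrix.diagonal d ∈ S) (i : n) : Matrix.single i i 1 ∈ S := by
  set p := Lagrange.basis Finset.univ d i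
  have aeval_p : Polynomial.aeval d p = Pi.single i 1 := by
    rw [Polynomial.aeval_pi_apply]
    funext j
    rw [Polynomial.coe_aeval_eq_eval]
    obtain rfl | hij := eq_or_ne i j
    · rw [Pi.single_eq_same, Lagrange.eval_basis_self hd.injOn (Finset.mem_univ _)]
    · rw [Pi.single_eq_of_ne' hij, Lagrange.eval_basis_of_ne hij (Finset.mem_univ _)]
  have hp : Matrix.single i i 1 = Polynomial.aeval (Matrix.diagonal d) p := by
    rw [← Matrix.diagonal_single, ← aeval_p]
    exact (Polynomial.aeval_algHom_apply (Matrix.diagonalAlgHom F) d p).symm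
  rw [hp]
  exact Algebra.adjoin_singleton_le hS (Polynomial.aeval_mem_adjoin_singleton F _)

theorem single_mem_of_apply_ne_zero (hS : ∀ i, Matrix.single i i 1 ∈ S) {M : Matrix n n F}
    (hM : M ∈ S) {i j : n} (hij : M i j ≠ 0) : Matrix.single i j 1 ∈ S := by
  have h : Matrix.single i j 1 = (M i j)⁻¹ • (Matrix.single i i 1 * M * Matrix.single j j 1) := by
    rw [Matrix.single_mul_mul_single, Matrix.smul_single, one_mul, mul_one, smul_eq_mul,
      inv_mul_cancel₀ hij]
  rw [h]
  exact S.smul_mem (S.mul_mem (S.mul_mem (hS i) hM) (hS j)) _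

theorem subalgebra_eq_top_of_reflTransGen {d : n → F} (hd : Injective d)
    (hdS : Matrix.diagonal d ∈ S)
    (hS : ∀ i j, ReflTransGen (fun i j => ∃ M ∈ S, M i j ≠ 0) i j) : S = ⊤ := by
  have hdiag := single_self_mem_of_diagonal_mem hd hdS
  refine subalgebra_eq_top_of_forall_single_mem fun i j => ?_
  induction hS i j with
  | refl => exact hdiag i
  | @tail k l _ hkl hik =>
    obtain ⟨M, hM, hMkl⟩ := hkl
    simpa only [Matrix.single_mul_single_same, mul_one] using
      S.mul_mem hik (single_mem_of_apply_ne_zero hdiag hM hMkl)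

end MatrixSubalgebra

section QuantumIntegers

theorem zpow_right_injective_of_not_isOfFinOrder {G : Type*} [GroupWithZero G] {a : G}
    (ha : a ≠ 0) (hfin : ¬IsOfFinOrder a) : Injective fun n : ℤ => a ^ n := by
  lift a to Gˣ using ha.isUnit
  rw [Units.isOfFinOrder_val] at hfin
  intro k l hkl
  exact injective_zpow_iff_not_isOfFinOrder.mpr hfin (Units.ext (by simpa using hkl))

theorem add_inv_eq_add_inv_iff {F : Type*} [Field F] {u v : F} (hu : u ≠ 0) (hv : v ≠ 0) :
    u + u⁻¹ = v + v⁻¹ ↔ u = v ∨ u * v = 1 := by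
  have h : u + u⁻¹ - (v + v⁻¹) = (u - v) * (u * v - 1) * (u * v)⁻¹ := by
    field_simp
    ring
  rw [← sub_eq_zero, h, mul_eq_zero, mul_eq_zero, sub_eq_zero, sub_eq_zero,
    or_iff_left (inv_ne_zero (mul_ne_zero hu hv))]

variable {t : ℂ}

theorem sq_sub_inv_sq_ne_zero (ht : t ≠ 0) (hfin : ¬IsOfFinOrder t) : t ^ 2 - t⁻¹ ^ 2 ≠ 0 := by
  intro h
  have h' : t ^ (2 : ℤ) = t ^ (-2 : ℤ) := by
    rw [← inv_zpow']
    exact_mod_cast sub_eq_zero.mp h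
  exact absurd (zpow_right_injective_of_not_isOfFinOrder ht hfin h') (by decide)

theorem qint_ne_zero (ht : t ≠ 0) (hfin : ¬IsOfFinOrder t) {n : ℤ} (hn : n ≠ 0) :
    qint t n ≠ 0 := by
  refine div_ne_zero (fun h => hn ?_) (sq_sub_inv_sq_ne_zero ht hfin)
  have := zpow_right_injective_of_not_isOfFinOrder ht hfin (sub_eq_zero.mp h)
  omega

end QuantumIntegers

section Casimir

variable {t : ℂ} {m : ℕ}

/-- The quantum Casimir element, whose eigenvalues tell the modules `m̲` apart. It is multiplied by
`(t² − t⁻²)²` compared with the usual normalization, so as to avoid denominators. -/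
def casimir (t : ℂ) : At t :=
  (t ^ 2 - t⁻¹ ^ 2) ^ 2 • (aY t * aX t) +
    (t ^ 2 • (aK t * aK t) + t⁻¹ ^ 2 • (aK' t * aK' t))

/-- The scalar by which `casimir t` acts on `m̲`. -/
def casimirEigenvalue (t : ℂ) (m : ℕ) : ℂ :=
  t ^ (2 * (m : ℤ) + 2) + (t ^ (2 * (m : ℤ) + 2))⁻¹

theorem casimirEigenvalue_injective (ht : t ≠ 0) (hfin : ¬IsOfFinOrder t) :
    Injective (casimirEigenvalue t) := by
  have hinj := zpow_right_injective_of_not_isOfFinOrder ht hfin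
  intro m n hmn
  obtain h | h := (add_inv_eq_add_inv_iff (zpow_ne_zero _ ht) (zpow_ne_zero _ ht)).mp hmn
  · have := hinj h
    omega
  · rw [← zpow_add₀ ht, ← zpow_zero t] at h
    have := hinj h
    omega

theorem Ymat_mul_apply_zero (M : Matrix (Fin (m + 1)) (Fin (m + 1)) ℂ) (j : Fin (m + 1)) :
    (Ymat t m * M) 0 j = 0 := by
  simp [Matrix.mul_apply, Ymat]

theorem Ymat_mul_apply_succ (M : Matrix (Fin (m + 1)) (Fin (m + 1)) ℂ) (i : Fin m)
    (j : Fin (m + 1)) :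
    (Ymat t m * M) i.succ j = qint t ((m : ℤ) - i) * M i.castSucc j := by
  rw [Matrix.mul_apply, Finset.sum_eq_single i.castSucc]
  · simp [Ymat]
  · intro k _ hk
    have hik : (i : ℕ) ≠ k := fun h => hk (Fin.ext h.symm)
    simp [Ymat, hik]
  · simp

theorem Ymat_mul_Xmat (t : ℂ) (m : ℕ) : Ymat t m * Xmat t m =
    Matrix.diagonal fun j : Fin (m + 1) => qint t j * qint t ((m : ℤ) - j + 1) := by
  ext i j
  cases i using Fin.cases with
  | zero =>
    rw [Ymat_mul_apply_zero, Matrix.diagonal_apply]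
    simp [qint]
  | succ i =>
    rw [Ymat_mul_apply_succ, Matrix.diagonal_apply]
    obtain rfl | hij := eq_or_ne i.succ j
    · have hm : (m : ℤ) - i.succ + 1 = m - i := by
        rw [Fin.val_succ]
        omega
      rw [if_pos rfl, hm, mul_comm]
      simp [Xmat]
    · have : (j : ℕ) ≠ i + 1 := fun h => hij (Fin.ext (by simpa using h.symm))
      simp [Xmat, this, hij]

theorem sq_mul_qint_mul_qint_add_eq (ht : t ≠ 0) (hfin : ¬IsOfFinOrder t) (m j : ℤ) :
    (t ^ 2 - t⁻¹ ^ 2) ^ 2 * (qint t j * qint t (m - j + 1)) +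
      (t ^ 2 * (t ^ (m - 2 * j) * t ^ (m - 2 * j)) +
        t⁻¹ ^ 2 * (t ^ (-(m - 2 * j)) * t ^ (-(m - 2 * j)))) =
    t ^ (2 * m + 2) + (t ^ (2 * m + 2))⁻¹ := by
  have mul_qint (n : ℤ) : (t ^ 2 - t⁻¹ ^ 2) * qint t n = t ^ (2 * n) - t ^ (-(2 * n)) :=
    mul_div_cancel₀ _ (sq_sub_inv_sq_ne_zero ht hfin)
  have sq_eq : t ^ 2 = t ^ (2 : ℤ) := by norm_cast
  have inv_sq_eq : t⁻¹ ^ 2 = t ^ (-2 : ℤ) := by rw [← inv_zpow']; norm_cast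
  rw [sq (t ^ 2 - t⁻¹ ^ 2), mul_mul_mul_comm, mul_qint, mul_qint, sq_eq, inv_sq_eq, ← zpow_neg]
  simp only [sub_mul, mul_sub, ← zpow_add₀ ht]
  ring_nf

theorem IsRho.map_casimir (ht : t ≠ 0) (hfin : ¬IsOfFinOrder t)
    {ρ : At t →ₐ[ℂ] Matrix (Fin (m + 1)) (Fin (m + 1)) ℂ} (hρ : IsRho t m ρ) :
    ρ (casimir t) = algebraMap ℂ _ (casimirEigenvalue t m) := by
  obtain ⟨hX, hY, hK, hK'⟩ := hρ
  simp only [casimir, map_add, map_mul, map_smul, hX, hY, hK, hK', Ymat_mul_Xmat, Kmat, K'mat,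
    Matrix.diagonal_mul_diagonal, ← Matrix.diagonal_smul, Matrix.diagonal_add,
    Matrix.algebraMap_eq_diagonal]
  congr 1
  funext j
  exact sq_mul_qint_mul_qint_add_eq ht hfin m j

end Casimir

section Surjectivity

variable {t : ℂ} {m : ℕ}

theorem Xmat_apply_ne_zero_of_covBy (ht : t ≠ 0) (hfin : ¬IsOfFinOrder t) {i j : Fin (m + 1)}
    (hij : i ⋖ j) : Xmat t m i j ≠ 0 := by
  have hj : (i : ℕ) + 1 = j := Nat.covBy_iff_add_one_eq.mp hij.coe_fin
  rw [Xmat, Matrix.of_apply, if_pos hj.symm]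
  exact qint_ne_zero ht hfin (by omega)

theorem Ymat_apply_ne_zero_of_covBy (ht : t ≠ 0) (hfin : ¬IsOfFinOrder t) {i j : Fin (m + 1)}
    (hij : i ⋖ j) : Ymat t m j i ≠ 0 := by
  have hj : (i : ℕ) + 1 = j := Nat.covBy_iff_add_one_eq.mp hij.coe_fin
  rw [Ymat, Matrix.of_apply, if_pos hj.symm]
  exact qint_ne_zero ht hfin (by omega)

theorem IsRho.surjective (ht : t ≠ 0) (hfin : ¬IsOfFinOrder t)
    {ρ : At t →ₐ[ℂ] Matrix (Fin (m + 1)) (Fin (m + 1)) ℂ} (hρ : IsRho t m ρ) :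
    Surjective ρ := by
  obtain ⟨hX, hY, hK, -⟩ := hρ
  have weights_injective : Injective fun j : Fin (m + 1) => t ^ ((m : ℤ) - 2 * j) := by
    intro i j hij
    have := zpow_right_injective_of_not_isOfFinOrder ht hfin hij
    omega
  have covBy_succ {i j : Fin (m + 1)} (hij : i < j) : i ⋖ Order.succ i :=
    Order.covBy_succ_of_not_isMax hij.not_isMax
  refine (AlgHom.range_eq_top ρ).mp <|
    subalgebra_eq_top_of_reflTransGen weights_injective ⟨aK t, hK⟩ fun i j => ?_
  exact reflTransGen_of_succ _
    (fun k hk => ⟨Xmat t m, ⟨aX t, hX⟩, Xmat_apply_ne_zero_of_covBy ht hfin (covBy_succ hk.2)⟩)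
    (fun k hk => ⟨Ymat t m, ⟨aY t, hY⟩, Ymat_apply_ne_zero_of_covBy ht hfin (covBy_succ hk.2)⟩)

end Surjectivity

/-- The image of `Θ : Aₜ → ∏_{m≥0} M_{m+1}(ℂ)` is dense in the product
topology (each matrix algebra with its standard topology). -/
theorem stmt4 (t : ℂ) (ht : t ≠ 0) (hroot : ∀ k : ℕ, 0 < k → t ^ k ≠ 1)
    (ρ : ∀ m : ℕ, At t →ₐ[ℂ] Matrix (Fin (m + 1)) (Fin (m + 1)) ℂ)
    (hρ : ∀ m, IsRho t m (ρ m)) :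
    DenseRange (fun Z : At t => (fun m : ℕ => ρ m Z :
      ∀ m : ℕ, Matrix (Fin (m + 1)) (Fin (m + 1)) ℂ)) := by
  have hfin : ¬IsOfFinOrder t := fun h =>
    let ⟨k, hk, htk⟩ := isOfFinOrder_iff_pow_eq_one.mp h
    hroot k hk htk
  exact denseRange_pi_of_forall_finset <|
    exists_forall_mem_finset_map_eq (fun m => (hρ m).surjective ht hfin)
      (fun m => (hρ m).map_casimir ht hfin) (casimirEigenvalue_injective ht hfin)

end
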